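/- arXiv:2006.06927 — 4 statements merged into one kernel-verified Lean document; each statement's English description precedes it below -/
import Mathlib

section
/- Let p < 1 with p ≠ 0 and let p' = p/(p−1) be its conjugate exponent. If the generator g is strictly increasing, then for all a, b ∈ ℝ with g(a) > 0 and g(b) > 0 the reverse pseudo-Young inequality holds: (a^(p) ⊘ g⁻¹(p)) ⊕ (b^(p') ⊘ g⁻¹(p')) ≤_g a ⊗ b; equivalently, g(a)^p/p + g(b)^{p'}/p' ≤ g(a)·g(b). -/
noncomputable section

/-- pseudo-addition: `x ⊕ y = g⁻¹(g x + g y)` -/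
def padd (g ginv : ℝ → ℝ) (x y : ℝ) : ℝ := ginv (g x + g y)

/-- pseudo-multiplication: `x ⊗ y = g⁻¹(g x * g y)` -/
def pmul (g ginv : ℝ → ℝ) (x y : ℝ) : ℝ := ginv (g x * g y)

/-- pseudo-division: `x ⊘ y = g⁻¹(g x / g y)` -/
def pdiv (g ginv : ℝ → ℝ) (x y : ℝ) : ℝ := ginv (g x / g y)

/-- pseudo-power: `x^(p) = g⁻¹((g x)^p)` (real power) -/
def ppow (g ginv : ℝ → ℝ) (x p : ℝ) : ℝ := ginv (g x ^ p)

/-- pseudo-order for an increasing generator: `x ≤_g y ↔ g x ≤ g y` -/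
def pleInc (g : ℝ → ℝ) (x y : ℝ) : Prop := g x ≤ g y

/-!
The map `s ↦ t ^ s` is convex, so its chord from `s = 0` to `s = p` is at most as steep as the one
from `0` to `1`: `(t ^ p - 1) / p ≤ t - 1` for `p < 1`, whatever the sign of `p`. With `p'`
conjugate to `p`, taking `t = x * y ^ (1 - p')` and multiplying by `y ^ p'` turns this into
`x ^ p / p + y ^ p' / p' ≤ x * y`. Since `g` carries the pseudo-operations to the ordinary ones, the
pseudo-inequality is the case `x = g a`, `y = g b`.
-/

theorem rpow_sub_one_div_le_rpow_sub_one_div {x p q : ℝ} (hx : 0 < x) (hp : p ≠ 0) (hq : q ≠ 0)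
    (hpq : p ≤ q) : (x ^ p - 1) / p ≤ (x ^ q - 1) / q := by
  simpa only [Real.rpow_zero, sub_zero] using
    (convexOn_rpow_left hx).secant_mono (Set.mem_univ 0) (Set.mem_univ p) (Set.mem_univ q) hp hq hpq

theorem reverse_young_inequality {x y p q : ℝ} (hx : 0 < x) (hy : 0 < y) (hp : p < 1) (hp0 : p ≠ 0)
    (hpq : p⁻¹ + q⁻¹ = 1) : x ^ p / p + y ^ q / q ≤ x * y := by
  have hq0 : q ≠ 0 := by
    rintro rfl
    rw [inv_zero, add_zero, inv_eq_one] at hpq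
    exact hp.ne hpq
  have exponent_eq : q + (1 - q) * p = 0 := by
    field_simp at hpq
    linarith
  have scaled_self : y ^ q * (x * y ^ (1 - q)) = x * y := by
    rw [mul_left_comm, ← Real.rpow_add hy, add_sub_cancel, Real.rpow_one]
  have scaled_rpow : y ^ q * (x * y ^ (1 - q)) ^ p = x ^ p := by
    rw [Real.mul_rpow hx.le (by positivity), ← Real.rpow_mul hy.le, mul_left_comm,
      ← Real.rpow_add hy, exponent_eq, Real.rpow_zero, mul_one]
  have chord : ((x * y ^ (1 - q)) ^ p - 1) / p ≤ x * y ^ (1 - q) - 1 := by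
    simpa only [Real.rpow_one, div_one] using
      rpow_sub_one_div_le_rpow_sub_one_div (x := x * y ^ (1 - q)) (by positivity) hp0 one_ne_zero
        hp.le
  calc x ^ p / p + y ^ q / q
      = y ^ q * (((x * y ^ (1 - q)) ^ p - 1) / p) + y ^ q := by
        rw [← mul_div_assoc, mul_sub, scaled_rpow, div_eq_mul_inv (y ^ q) q,
          eq_sub_of_add_eq' hpq]
        ring
    _ ≤ y ^ q * (x * y ^ (1 - q) - 1) + y ^ q := by gcongr
    _ = x * y := by rw [mul_sub, scaled_self, mul_one, sub_add_cancel]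

section PseudoOperations

variable {g ginv : ℝ → ℝ}

theorem apply_padd (hri : Function.RightInverse ginv g) (x y : ℝ) :
    g (padd g ginv x y) = g x + g y := hri _

theorem apply_pmul (hri : Function.RightInverse ginv g) (x y : ℝ) :
    g (pmul g ginv x y) = g x * g y := hri _

theorem apply_pdiv (hri : Function.RightInverse ginv g) (x y : ℝ) :
    g (pdiv g ginv x y) = g x / g y := hri _

theorem apply_ppow (hri : Function.RightInverse ginv g) (x p : ℝ) :
    g (ppow g ginv x p) = g x ^ p := hri _

end PseudoOperations

theorem pseudo_young_rev_inc_general {g ginv : ℝ → ℝ} (hri : Function.RightInverse ginv g)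
    {p p' : ℝ} (hp : p < 1) (hp0 : p ≠ 0) (hp' : p' = p / (p - 1))
    {a b : ℝ} (ha : 0 < g a) (hb : 0 < g b) :
    pleInc g
      (padd g ginv (pdiv g ginv (ppow g ginv a p) (ginv p))
        (pdiv g ginv (ppow g ginv b p') (ginv p')))
      (pmul g ginv a b) := by
  have conjugate : p⁻¹ + p'⁻¹ = 1 := by
    rw [hp', inv_div, inv_eq_one_div, ← add_div, add_sub_cancel, div_self hp0]
  simp only [pleInc, apply_padd hri, apply_pmul hri, apply_pdiv hri, apply_ppow hri, hri p, hri p']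
  exact reverse_young_inequality ha hb hp hp0 conjugate

/-- Reverse pseudo-Young inequality for an increasing generator, `p < 1`, `p ≠ 0`:
`(a^(p) ⊘ g⁻¹(p)) ⊕ (b^(p') ⊘ g⁻¹(p')) ≤_g a ⊗ b`. -/
theorem pseudo_young_rev_inc (g ginv : ℝ → ℝ)
    (hmono : StrictMono g) (hcont : Continuous g)
    (hli : Function.LeftInverse ginv g) (hri : Function.RightInverse ginv g)
    (p p' : ℝ) (hp : p < 1) (hp0 : p ≠ 0) (hp' : p' = p / (p - 1))
    (a b : ℝ) (ha : 0 < g a) (hb : 0 < g b) :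
    pleInc g
      (padd g ginv (pdiv g ginv (ppow g ginv a p) (ginv p))
        (pdiv g ginv (ppow g ginv b p') (ginv p')))
      (pmul g ginv a b) := by
  exact pseudo_young_rev_inc_general hri hp hp0 hp' ha hb
end
end

section
/- Let p < 1 with p ≠ 0 and let p' = p/(p−1) be its conjugate exponent. If the generator g is strictly decreasing, then for all a, b ∈ ℝ with g(a) > 0 and g(b) > 0 it holds that a ⊗ b ≤_g (a^(p) ⊘ g⁻¹(p)) ⊕ (b^(p') ⊘ g⁻¹(p')); equivalently, g(a)^p/p + g(b)^{p'}/p' ≤ g(a)·g(b). -/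
noncomputable section

/-- pseudo-order for a decreasing generator: `x ≤_g y ↔ g x ≥ g y` -/
def pleDec (g : ℝ → ℝ) (x y : ℝ) : Prop := g y ≤ g x

/-!
Applying `g` turns the claim into Young's inequality with exponents below `1`, where it reverses.
One of the weights `p⁻¹`, `p'⁻¹` is then nonpositive and the other is at least `1`, and Bernoulli's
inequality for exponents at least `1` gives the weighted arithmetic-geometric mean inequality in
the opposite direction.
-/

theorem arith_mean_le_geom_mean2_weighted_of_nonpos {w₁ w₂ u v : ℝ} (hw₂ : w₂ ≤ 0)
    (hw : w₁ + w₂ = 1) (hu : 0 ≤ u) (hv : 0 < v) :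
    w₁ * u + w₂ * v ≤ u ^ w₁ * v ^ w₂ := by
  have bernoulli : 1 + w₁ * (u / v - 1) ≤ (1 + (u / v - 1)) ^ w₁ :=
    one_add_mul_self_le_rpow_one_add (by linarith [div_nonneg hu hv.le]) (by linarith)
  obtain rfl : w₂ = 1 - w₁ := by linarith
  calc
    w₁ * u + (1 - w₁) * v = (1 + w₁ * (u / v - 1)) * v := by field_simp; ring
    _ ≤ (1 + (u / v - 1)) ^ w₁ * v := by gcongr
    _ = (u / v) ^ w₁ * v := by rw [add_sub_cancel]
    _ = u ^ w₁ * v ^ (1 - w₁) := by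
      rw [Real.div_rpow hu hv.le, Real.rpow_sub hv, Real.rpow_one]
      ring

theorem rpow_div_add_rpow_div_le_mul {p q x y : ℝ} (hp : p < 1) (hq : q < 1)
    (hpq : p⁻¹ + q⁻¹ = 1) (hx : 0 < x) (hy : 0 < y) :
    x ^ p / p + y ^ q / q ≤ x * y := by
  wlog hq_inv : q⁻¹ ≤ 0 generalizing p q x y
  · have hq_pos : 0 < q := inv_pos.mp (not_le.mp hq_inv)
    have hp_inv : p⁻¹ ≤ 0 := by linarith [(one_lt_inv₀ hq_pos).mpr hq]
    rw [add_comm, mul_comm x]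
    exact this hq hp (by rwa [add_comm]) hy hx hp_inv
  have hp_ne : p ≠ 0 := by
    rintro rfl
    linarith [inv_zero (G₀ := ℝ)]
  have hq_ne : q ≠ 0 := by
    rintro rfl
    exact hp.ne (by simpa using hpq)
  calc
    x ^ p / p + y ^ q / q = p⁻¹ * x ^ p + q⁻¹ * y ^ q := by
      rw [div_eq_inv_mul, div_eq_inv_mul]
    _ ≤ (x ^ p) ^ p⁻¹ * (y ^ q) ^ q⁻¹ :=
      arith_mean_le_geom_mean2_weighted_of_nonpos hq_inv hpq (by positivity) (by positivity)
    _ = x * y := by rw [Real.rpow_rpow_inv hx.le hp_ne, Real.rpow_rpow_inv hy.le hq_ne]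

theorem div_sub_one_lt_one {p : ℝ} (hp : p < 1) : p / (p - 1) < 1 := by
  rw [div_lt_one_of_neg (sub_neg.mpr hp)]
  exact sub_one_lt p

theorem inv_add_inv_div_sub_one {p : ℝ} (hp0 : p ≠ 0) : p⁻¹ + (p / (p - 1))⁻¹ = 1 := by
  field_simp
  ring

theorem pseudo_young_rev_dec_general {g ginv : ℝ → ℝ} (hri : Function.RightInverse ginv g)
    {p p' : ℝ} (hp : p < 1) (hp0 : p ≠ 0) (hp' : p' = p / (p - 1))
    {a b : ℝ} (ha : 0 < g a) (hb : 0 < g b) :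
    pleDec g (pmul g ginv a b)
      (padd g ginv (pdiv g ginv (ppow g ginv a p) (ginv p))
        (pdiv g ginv (ppow g ginv b p') (ginv p'))) := by
  subst hp'
  simp only [pleDec, apply_padd hri, apply_pmul hri, apply_pdiv hri, apply_ppow hri, hri _]
  exact rpow_div_add_rpow_div_le_mul hp (div_sub_one_lt_one hp) (inv_add_inv_div_sub_one hp0) ha hb

/-- Pseudo-Young inequality for a decreasing generator, `p < 1`, `p ≠ 0`:
`a ⊗ b ≤_g (a^(p) ⊘ g⁻¹(p)) ⊕ (b^(p') ⊘ g⁻¹(p'))`. -/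
theorem pseudo_young_rev_dec (g ginv : ℝ → ℝ)
    (hmono : StrictAnti g) (hcont : Continuous g)
    (hli : Function.LeftInverse ginv g) (hri : Function.RightInverse ginv g)
    (p p' : ℝ) (hp : p < 1) (hp0 : p ≠ 0) (hp' : p' = p / (p - 1))
    (a b : ℝ) (ha : 0 < g a) (hb : 0 < g b) :
    pleDec g (pmul g ginv a b)
      (padd g ginv (pdiv g ginv (ppow g ginv a p) (ginv p))
        (pdiv g ginv (ppow g ginv b p') (ginv p'))) :=
  pseudo_young_rev_dec_general hri hp hp0 hp' ha hb
end
end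

section
/- Let 0 < p < 1. Let f, h : ℝ → ℝ with g∘f and g∘h measurable and g(f(x)) ≥ 0, g(h(x)) ≥ 0 for almost every x, and suppose ∫_ℝ |g(f(x))|^p·g'(x) dx < ∞ and ∫_ℝ |g(h(x))|^p·g'(x) dx < ∞. Then the reverse pseudo-Minkowski inequality holds: [f]_p ⊕ [h]_p ≤_g [f ⊕ h]_p; equivalently, (∫_ℝ |g(f(x))|^p·g'(x) dx)^{1/p} + (∫_ℝ |g(h(x))|^p·g'(x) dx)^{1/p} ≤ (∫_ℝ |g(f(x)) + g(h(x))|^p·g'(x) dx)^{1/p}. -/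
open MeasureTheory

noncomputable section

/-- pseudo `r`-functional: `[f]_r = g⁻¹((∫ |g (f x)|^r g'(x) dx)^(1/r))` -/
def pfunc (g ginv g' : ℝ → ℝ) (f : ℝ → ℝ) (r : ℝ) : ℝ :=
  ginv ((∫ x, |g (f x)| ^ r * g' x) ^ (1 / r))

/-!
For `p ≤ 1` the triangle inequality `‖∫ Φ‖ ≤ ∫ ‖Φ‖` in the `ℓ^(1/p)` norm is the reverse Minkowski
inequality: apply it to `Φ = (uᵢ ^ p * w)ᵢ`. The exponents cancel pointwise, so that
`‖Φ‖ = (∑ uᵢ) ^ p * w`, while `‖∫ Φ‖` is the `p`-th power of the sum of the terms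
`(∫ uᵢ ^ p * w) ^ (1 / p)`.
-/

section ReverseMinkowski

variable {α ι : Type*} [Fintype ι] {mα : MeasurableSpace α} {μ : Measure α} {p : ℝ}

lemma sum_norm_integral_rpow_rpow_one_div_le {E : ι → Type*} [∀ i, NormedAddCommGroup (E i)]
    [∀ i, NormedSpace ℝ (E i)] [∀ i, CompleteSpace (E i)] {q : ℝ} (hq : 1 ≤ q)
    {F : ∀ i, α → E i} (hF : ∀ i, Integrable (F i) μ) :
    (∑ i, ‖∫ x, F i x ∂μ‖ ^ q) ^ (1 / q) ≤ ∫ x, (∑ i, ‖F i x‖ ^ q) ^ (1 / q) ∂μ := by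
  have hq0 : 0 < q := zero_lt_one.trans_le hq
  have : Fact (1 ≤ ENNReal.ofReal q) := ⟨ENNReal.one_le_ofReal.2 hq⟩
  have hq' : (ENNReal.ofReal q).toReal = q := ENNReal.toReal_ofReal hq0.le
  have norm_eq (v : PiLp (ENNReal.ofReal q) E) : ‖v‖ = (∑ i, ‖v i‖ ^ q) ^ (1 / q) := by
    rw [PiLp.norm_eq_sum (by rwa [hq']), hq']
  let Φ : α → PiLp (ENNReal.ofReal q) E := fun x ↦ WithLp.toLp _ fun i ↦ F i x
  calc (∑ i, ‖∫ x, F i x ∂μ‖ ^ q) ^ (1 / q)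
      = ‖∫ x, Φ x ∂μ‖ := by simp only [norm_eq, eval_integral_piLp (f := Φ) hF, Φ]
    _ ≤ ∫ x, ‖Φ x‖ ∂μ := norm_integral_le_integral_norm Φ
    _ = ∫ x, (∑ i, ‖F i x‖ ^ q) ^ (1 / q) ∂μ := by simp only [norm_eq, Φ]

lemma sum_rpow_mul_rpow_one_div_rpow (hp : 0 < p) {a : ι → ℝ} (ha : ∀ i, 0 ≤ a i)
    {w : ℝ} (hw : 0 ≤ w) :
    (∑ i, (a i ^ p * w) ^ (1 / p)) ^ p = (∑ i, a i) ^ p * w := by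
  have cancel (i : ι) : (a i ^ p * w) ^ (1 / p) = a i * w ^ (1 / p) := by
    rw [Real.mul_rpow (Real.rpow_nonneg (ha i) p) hw, one_div, Real.rpow_rpow_inv (ha i) hp.ne']
  simp only [cancel]
  rw [← Finset.sum_mul, Real.mul_rpow (Finset.sum_nonneg fun i _ ↦ ha i) (Real.rpow_nonneg hw _),
    one_div, Real.rpow_inv_rpow hw hp.ne']

theorem sum_integral_rpow_mul_rpow_one_div_le (hp0 : 0 < p) (hp1 : p ≤ 1) {u : ι → α → ℝ}
    {w : α → ℝ} (hu : ∀ i, 0 ≤ᵐ[μ] u i) (hw : 0 ≤ᵐ[μ] w)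
    (hint : ∀ i, Integrable (fun x ↦ u i x ^ p * w x) μ) :
    ∑ i, (∫ x, u i x ^ p * w x ∂μ) ^ (1 / p) ≤ (∫ x, (∑ i, u i x) ^ p * w x ∂μ) ^ (1 / p) := by
  have term_nonneg (i : ι) : ∀ᵐ x ∂μ, 0 ≤ u i x ^ p * w x := by
    filter_upwards [hu i, hw] with x hux hwx using mul_nonneg (Real.rpow_nonneg hux p) hwx
  have integral_term_nonneg (i : ι) : 0 ≤ ∫ x, u i x ^ p * w x ∂μ :=
    integral_nonneg_of_ae (term_nonneg i)
  have minkowski : (∑ i, (∫ x, u i x ^ p * w x ∂μ) ^ (1 / p)) ^ p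
      ≤ ∫ x, (∑ i, u i x) ^ p * w x ∂μ := calc
    _ = (∑ i, ‖∫ x, u i x ^ p * w x ∂μ‖ ^ (1 / p)) ^ (1 / (1 / p)) := by
      simp only [Real.norm_of_nonneg (integral_term_nonneg _), one_div_one_div]
    _ ≤ ∫ x, (∑ i, ‖u i x ^ p * w x‖ ^ (1 / p)) ^ (1 / (1 / p)) ∂μ :=
      sum_norm_integral_rpow_rpow_one_div_le ((one_le_div hp0).2 hp1) hint
    _ = ∫ x, (∑ i, u i x) ^ p * w x ∂μ := by
      apply integral_congr_ae
      filter_upwards [ae_all_iff.2 hu, ae_all_iff.2 term_nonneg, hw] with x hux htx hwx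
      simp only [Real.norm_of_nonneg (htx _), one_div_one_div,
        sum_rpow_mul_rpow_one_div_rpow hp0 hux hwx]
  have sum_nonneg : 0 ≤ ∑ i, (∫ x, u i x ^ p * w x ∂μ) ^ (1 / p) :=
    Finset.sum_nonneg fun i _ ↦ Real.rpow_nonneg (integral_term_nonneg i) _
  calc ∑ i, (∫ x, u i x ^ p * w x ∂μ) ^ (1 / p)
      = ((∑ i, (∫ x, u i x ^ p * w x ∂μ) ^ (1 / p)) ^ p) ^ (1 / p) := by
        simpa only [one_div] using (Real.rpow_rpow_inv sum_nonneg hp0.ne').symm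
    _ ≤ (∫ x, (∑ i, u i x) ^ p * w x ∂μ) ^ (1 / p) := by gcongr

end ReverseMinkowski

theorem pseudo_minkowski_reverse_general {g ginv g' : ℝ → ℝ}
    (hmono : Monotone g) (hderiv : ∀ x, HasDerivAt g (g' x) x)
    (hri : Function.RightInverse ginv g) {p : ℝ} (hp0 : 0 < p) (hp1 : p ≤ 1) {f h : ℝ → ℝ}
    (hfpos : ∀ᵐ x, 0 ≤ g (f x)) (hhpos : ∀ᵐ x, 0 ≤ g (h x))
    (hfi : Integrable (fun x ↦ |g (f x)| ^ p * g' x))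
    (hhi : Integrable (fun x ↦ |g (h x)| ^ p * g' x)) :
    pleInc g (padd g ginv (pfunc g ginv g' f p) (pfunc g ginv g' h p))
      (pfunc g ginv g' (fun x ↦ padd g ginv (f x) (h x)) p) := by
  have hg' : 0 ≤ᵐ[volume] g' := .of_forall fun x ↦ (hderiv x).deriv ▸ hmono.deriv_nonneg
  have abs_add_eq : (fun x ↦ |g (f x) + g (h x)| ^ p * g' x)
      =ᵐ[volume] fun x ↦ (|g (f x)| + |g (h x)|) ^ p * g' x := by
    filter_upwards [hfpos, hhpos] with x hfx hhx
    rw [abs_of_nonneg hfx, abs_of_nonneg hhx, abs_of_nonneg (add_nonneg hfx hhx)]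
  have minkowski := sum_integral_rpow_mul_rpow_one_div_le hp0 hp1
    (u := ![fun x ↦ |g (f x)|, fun x ↦ |g (h x)|])
    (Fin.forall_fin_two.2 ⟨.of_forall fun x ↦ abs_nonneg _, .of_forall fun x ↦ abs_nonneg _⟩) hg'
    (Fin.forall_fin_two.2 ⟨hfi, hhi⟩)
  simp only [pleInc, padd, pfunc, hri.eq, integral_congr_ae abs_add_eq]
  simpa only [Fin.sum_univ_two, Matrix.cons_val_zero, Matrix.cons_val_one] using minkowski

/-- Reverse pseudo-Minkowski inequality for an increasing generator, `0 < p < 1`: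
`[f]_p ⊕ [h]_p ≤_g [f ⊕ h]_p`. -/
theorem pseudo_minkowski_reverse (g ginv g' : ℝ → ℝ)
    (hmono : StrictMono g) (hderiv : ∀ x, HasDerivAt g (g' x) x)
    (hli : Function.LeftInverse ginv g) (hri : Function.RightInverse ginv g)
    (p : ℝ) (hp0 : 0 < p) (hp1 : p < 1)
    (f h : ℝ → ℝ) (hf : Measurable (g ∘ f)) (hh : Measurable (g ∘ h))
    (hfpos : ∀ᵐ x ∂(volume : Measure ℝ), 0 ≤ g (f x))
    (hhpos : ∀ᵐ x ∂(volume : Measure ℝ), 0 ≤ g (h x))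
    (hfi : Integrable (fun x => |g (f x)| ^ p * g' x))
    (hhi : Integrable (fun x => |g (h x)| ^ p * g' x)) :
    pleInc g (padd g ginv (pfunc g ginv g' f p) (pfunc g ginv g' h p))
      (pfunc g ginv g' (fun x => padd g ginv (f x) (h x)) p) :=
  pseudo_minkowski_reverse_general hmono.monotone hderiv hri hp0 hp1.le hfpos hhpos hfi hhi
end
end

section
/- Let u, v ∈ ℝ satisfy g(u) > 0, g(v) > 0 and u ≠ v. Then the pseudo geometric–logarithmic–arithmetic mean inequalities hold: (u ⊗ v)^(1/2) ≤_g (1/(g(Ln u) − g(Ln v))) ⊙ (u ⊖ v) ≤_g (1/2) ⊙ (u ⊕ v); equivalently, √(g(u)·g(v)) ≤ (g(u) − g(v))/(ln g(u) − ln g(v)) ≤ (g(u) + g(v))/2. -/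
noncomputable section

/-- pseudo-subtraction: `x ⊖ y = g⁻¹(g x - g y)` -/
def psub (g ginv : ℝ → ℝ) (x y : ℝ) : ℝ := ginv (g x - g y)

/-- pseudo-scalar multiplication: `l ⊙ x = g⁻¹(l * g x)` -/
def psmul (g ginv : ℝ → ℝ) (l x : ℝ) : ℝ := ginv (l * g x)

/-- pseudo-logarithm: `Ln x = g⁻¹(ln (g x))` -/
def pln (g ginv : ℝ → ℝ) (x : ℝ) : ℝ := ginv (Real.log (g x))

/-!
Write `G = √(ab)` and `t = (log a - log b) / 2`. Then `a = G eᵗ` and `b = G e⁻ᵗ`, so the logarithmic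
and arithmetic means of `a` and `b` are `G sinh t / t` and `G cosh t`, and it remains to see that
`1 < sinh t / t < cosh t` for `t ≠ 0`. By the mean value theorem `sinh t / t = cosh c` for some `c`
strictly between `0` and `t`.
-/

section LogMean

open Real

theorem exists_abs_lt_and_sinh_div_self_eq_cosh {t : ℝ} (ht : t ≠ 0) :
    ∃ c, c ≠ 0 ∧ |c| < |t| ∧ sinh t / t = cosh c := by
  wlog hpos : 0 < t generalizing t
  · have hneg : 0 < -t := neg_pos.2 (lt_of_le_of_ne (not_lt.1 hpos) ht)
    simpa only [sinh_neg, neg_div_neg_eq, abs_neg] using this hneg.ne' hneg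
  obtain ⟨c, ⟨hc, hct⟩, hslope⟩ :=
    exists_deriv_eq_slope sinh hpos continuous_sinh.continuousOn
      differentiable_sinh.differentiableOn
  refine ⟨c, hc.ne', ?_, ?_⟩
  · rwa [abs_of_pos hc, abs_of_pos hpos]
  · simpa only [Real.deriv_sinh, sinh_zero, sub_zero] using hslope.symm

theorem one_lt_sinh_div_self {t : ℝ} (ht : t ≠ 0) : 1 < sinh t / t := by
  obtain ⟨c, hc, -, heq⟩ := exists_abs_lt_and_sinh_div_self_eq_cosh ht
  exact heq ▸ one_lt_cosh.2 hc

theorem sinh_div_self_lt_cosh {t : ℝ} (ht : t ≠ 0) : sinh t / t < cosh t := by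
  obtain ⟨c, -, hct, heq⟩ := exists_abs_lt_and_sinh_div_self_eq_cosh ht
  exact heq ▸ cosh_lt_cosh.2 hct

theorem exp_half_add_mul_two_mul_sinh_half_sub (x y : ℝ) :
    exp ((x + y) / 2) * (2 * sinh ((x - y) / 2)) = exp x - exp y := by
  rw [sinh_eq, mul_div_cancel₀ _ two_ne_zero, mul_sub, ← exp_add, ← exp_add]
  ring_nf

theorem exp_half_add_mul_two_mul_cosh_half_sub (x y : ℝ) :
    exp ((x + y) / 2) * (2 * cosh ((x - y) / 2)) = exp x + exp y := by
  rw [cosh_eq, mul_div_cancel₀ _ two_ne_zero, mul_add, ← exp_add, ← exp_add]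
  ring_nf

/-- The logarithmic mean of two distinct positive reals. On the diagonal division by zero gives
`logMean a a = 0`, not the limiting value `a`. -/
def logMean (a b : ℝ) : ℝ := (a - b) / (log a - log b)

theorem logMean_exp (x y : ℝ) :
    logMean (exp x) (exp y) =
      exp ((x + y) / 2) * (sinh ((x - y) / 2) / ((x - y) / 2)) := by
  rw [logMean, log_exp, log_exp, ← exp_half_add_mul_two_mul_sinh_half_sub, mul_div_assoc,
    div_div_eq_mul_div, mul_comm 2]

theorem sqrt_mul_lt_logMean {a b : ℝ} (ha : 0 < a) (hb : 0 < b) (hab : a ≠ b) :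
    √(a * b) < logMean a b := by
  obtain ⟨x, rfl⟩ : ∃ x, exp x = a := ⟨log a, exp_log ha⟩
  obtain ⟨y, rfl⟩ : ∃ y, exp y = b := ⟨log b, exp_log hb⟩
  have hxy : (x - y) / 2 ≠ 0 := div_ne_zero (sub_ne_zero.2 (ne_of_apply_ne exp hab)) two_ne_zero
  rw [← exp_add, ← exp_half, logMean_exp]
  exact lt_mul_of_one_lt_right (exp_pos _) (one_lt_sinh_div_self hxy)

theorem logMean_lt_add_div_two {a b : ℝ} (ha : 0 < a) (hb : 0 < b) (hab : a ≠ b) :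
    logMean a b < (a + b) / 2 := by
  obtain ⟨x, rfl⟩ : ∃ x, exp x = a := ⟨log a, exp_log ha⟩
  obtain ⟨y, rfl⟩ : ∃ y, exp y = b := ⟨log b, exp_log hb⟩
  have hxy : (x - y) / 2 ≠ 0 := div_ne_zero (sub_ne_zero.2 (ne_of_apply_ne exp hab)) two_ne_zero
  calc logMean (exp x) (exp y)
      = exp ((x + y) / 2) * (sinh ((x - y) / 2) / ((x - y) / 2)) := logMean_exp x y
    _ < exp ((x + y) / 2) * cosh ((x - y) / 2) := by
      gcongr; exact sinh_div_self_lt_cosh hxy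
    _ = (exp x + exp y) / 2 := by
      rw [← exp_half_add_mul_two_mul_cosh_half_sub]; ring

end LogMean

section Pseudo

variable {g ginv : ℝ → ℝ}

theorem apply_ppow_pmul_half (hri : Function.RightInverse ginv g) (u v : ℝ) :
    g (ppow g ginv (pmul g ginv u v) (1 / 2)) = √(g u * g v) := by
  rw [ppow, pmul, hri, hri, Real.sqrt_eq_rpow]

theorem apply_psmul_psub_eq_logMean (hri : Function.RightInverse ginv g) (u v : ℝ) :
    g (psmul g ginv (1 / (g (pln g ginv u) - g (pln g ginv v))) (psub g ginv u v)) =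
      logMean (g u) (g v) := by
  rw [psmul, psub, pln, pln, hri, hri, hri, hri, one_div_mul_eq_div, logMean]

theorem apply_psmul_half_padd (hri : Function.RightInverse ginv g) (u v : ℝ) :
    g (psmul g ginv (1 / 2) (padd g ginv u v)) = (g u + g v) / 2 := by
  rw [psmul, padd, hri, hri, one_div_mul_eq_div]

end Pseudo

theorem pseudo_GLA_mean_general (g ginv : ℝ → ℝ) (hri : Function.RightInverse ginv g)
    (u v : ℝ) (hu : 0 < g u) (hv : 0 < g v) (huv : g u ≠ g v) :
    pleInc g (ppow g ginv (pmul g ginv u v) (1 / 2))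
      (psmul g ginv (1 / (g (pln g ginv u) - g (pln g ginv v))) (psub g ginv u v)) ∧
      pleInc g
        (psmul g ginv (1 / (g (pln g ginv u) - g (pln g ginv v))) (psub g ginv u v))
        (psmul g ginv (1 / 2) (padd g ginv u v)) := by
  rw [pleInc, pleInc, apply_ppow_pmul_half hri, apply_psmul_psub_eq_logMean hri,
    apply_psmul_half_padd hri]
  exact ⟨(sqrt_mul_lt_logMean hu hv huv).le, (logMean_lt_add_div_two hu hv huv).le⟩

/-- Pseudo geometric–logarithmic–arithmetic mean inequalities:
`(u ⊗ v)^(1/2) ≤_g (1/(g(Ln u) - g(Ln v))) ⊙ (u ⊖ v) ≤_g (1/2) ⊙ (u ⊕ v)`. -/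
theorem pseudo_GLA_mean (g ginv : ℝ → ℝ)
    (hmono : StrictMono g) (hcont : Continuous g)
    (hli : Function.LeftInverse ginv g) (hri : Function.RightInverse ginv g)
    (u v : ℝ) (hu : 0 < g u) (hv : 0 < g v) (huv : u ≠ v) :
    pleInc g (ppow g ginv (pmul g ginv u v) (1 / 2))
      (psmul g ginv (1 / (g (pln g ginv u) - g (pln g ginv v))) (psub g ginv u v)) ∧
      pleInc g
        (psmul g ginv (1 / (g (pln g ginv u) - g (pln g ginv v))) (psub g ginv u v))
        (psmul g ginv (1 / 2) (padd g ginv u v)) :=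
  pseudo_GLA_mean_general g ginv hri u v hu hv (hmono.injective.ne huv)
end
end
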